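/- For the class of finite-dimensional complex normed spaces, the following three properties are equivalent: (1) the approximate Ramsey property: for all finite-dimensional complex normed spaces X, Y and ε > 0 there is a finite-dimensional complex normed space Z such that every 1-Lipschitz map c from the set Emb(X,Z) of linear isometric embeddings of X into Z (with the operator-norm metric) to [0,1] satisfies |c(γ∘η₀) − c(γ∘η₁)| ≤ ε for some linear isometric embedding γ : Y → Z and all η₀, η₁ ∈ Emb(X,Y); (2) the discrete approximate Ramsey property: for all X, Y, every r ∈ ℕ, and ε > 0 there is Z such that every coloring of Emb(X,Z) with r colors admits a linear isometric embedding γ : Y → Z and a color j such that each γ∘η with η ∈ Emb(X,Y) is within operator-norm distance ε of an element of Emb(X,Z) of color j; (3) the compact approximate Ramsey property: for all X, Y, every compact metric space K, and ε > 0 there is Z such that every 1-Lipschitz map c : Emb(X,Z) → K satisfies d_K(c(γ∘η₀), c(γ∘η₁)) ≤ ε for some linear isometric embedding γ : Y → Z and all η₀, η₁ ∈ Emb(X,Y). -/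

import Mathlib

universe u

/-- A linear isometric embedding between normed spaces. -/
def IsLinIsomEmb {X Y : Type*} [NormedAddCommGroup X] [NormedSpace ℂ X]
    [NormedAddCommGroup Y] [NormedSpace ℂ Y] (φ : X →L[ℂ] Y) : Prop :=
  ∀ x, ‖φ x‖ = ‖x‖

/-- The approximate Ramsey property (with `[0,1]`-valued `1`-Lipschitz colorings) of the class
of finite-dimensional complex normed spaces. -/
def ContinuousARP : Prop :=
  ∀ (X Y : Type u) (_ : NormedAddCommGroup X) (_ : NormedSpace ℂ X) (_ : FiniteDimensional ℂ X)
    (_ : NormedAddCommGroup Y) (_ : NormedSpace ℂ Y) (_ : FiniteDimensional ℂ Y)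
    (ε : ℝ), 0 < ε →
    ∃ (Z : Type u) (_ : NormedAddCommGroup Z) (_ : NormedSpace ℂ Z)
      (_ : FiniteDimensional ℂ Z),
      ∀ c : {φ : X →L[ℂ] Z // IsLinIsomEmb φ} → ℝ,
        LipschitzWith 1 c → (∀ φ, c φ ∈ Set.Icc (0 : ℝ) 1) →
        ∃ (γ : Y →L[ℂ] Z) (_ : IsLinIsomEmb γ),
          ∀ (η₀ η₁ : X →L[ℂ] Y), IsLinIsomEmb η₀ → IsLinIsomEmb η₁ →
            ∀ (h₀ : IsLinIsomEmb (γ.comp η₀)) (h₁ : IsLinIsomEmb (γ.comp η₁)),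
              |c ⟨γ.comp η₀, h₀⟩ - c ⟨γ.comp η₁, h₁⟩| ≤ ε

/-- The discrete approximate Ramsey property (with colorings by finitely many colors) of the
class of finite-dimensional complex normed spaces. -/
def DiscreteARP : Prop :=
  ∀ (X Y : Type u) (_ : NormedAddCommGroup X) (_ : NormedSpace ℂ X) (_ : FiniteDimensional ℂ X)
    (_ : NormedAddCommGroup Y) (_ : NormedSpace ℂ Y) (_ : FiniteDimensional ℂ Y)
    (r : ℕ) (ε : ℝ), 0 < ε →
    ∃ (Z : Type u) (_ : NormedAddCommGroup Z) (_ : NormedSpace ℂ Z)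
      (_ : FiniteDimensional ℂ Z),
      ∀ c : {φ : X →L[ℂ] Z // IsLinIsomEmb φ} → Fin r,
        ∃ (γ : Y →L[ℂ] Z) (_ : IsLinIsomEmb γ) (j : Fin r),
          ∀ η : X →L[ℂ] Y, IsLinIsomEmb η →
            ∃ (ξ : X →L[ℂ] Z) (hξ : IsLinIsomEmb ξ),
              c ⟨ξ, hξ⟩ = j ∧ ‖γ.comp η - ξ‖ ≤ ε

/-- The compact approximate Ramsey property (with `1`-Lipschitz colorings valued in an arbitrary
compact metric space) of the class of finite-dimensional complex normed spaces. -/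
def CompactARP : Prop :=
  ∀ (X Y : Type u) (_ : NormedAddCommGroup X) (_ : NormedSpace ℂ X) (_ : FiniteDimensional ℂ X)
    (_ : NormedAddCommGroup Y) (_ : NormedSpace ℂ Y) (_ : FiniteDimensional ℂ Y)
    (K : Type) (_ : MetricSpace K) (_ : CompactSpace K)
    (ε : ℝ), 0 < ε →
    ∃ (Z : Type u) (_ : NormedAddCommGroup Z) (_ : NormedSpace ℂ Z)
      (_ : FiniteDimensional ℂ Z),
      ∀ c : {φ : X →L[ℂ] Z // IsLinIsomEmb φ} → K,
        LipschitzWith 1 c →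
        ∃ (γ : Y →L[ℂ] Z) (_ : IsLinIsomEmb γ),
          ∀ (η₀ η₁ : X →L[ℂ] Y), IsLinIsomEmb η₀ → IsLinIsomEmb η₁ →
            ∀ (h₀ : IsLinIsomEmb (γ.comp η₀)) (h₁ : IsLinIsomEmb (γ.comp η₁)),
              dist (c ⟨γ.comp η₀, h₀⟩) (c ⟨γ.comp η₁, h₁⟩) ≤ ε

/-!
For a fixed `Z`, each property is a statement about the maps `γ ∘ · : Emb(X, Y) → Emb(X, Z)`
between metric spaces, so colorings can be traded against one another there.

* A coloring by finitely many colors `i` is encoded by the truncated distances to its color classes: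
  these form one `1`-Lipschitz map into a power of `[0, 1]`, on which composing with `γ` has small
  oscillation. If `γ ∘ η₀` has color `i`, every `γ ∘ η` is then close to the class of `i`.
* A power of `[0, 1]` is reached from `[0, 1]` by iterating the property: stabilize one coordinate
  in `Z` against `Z'`, and the remaining ones in `Z'` against `Y`.
* A `1`-Lipschitz map into a compact space becomes a finite coloring after rounding to a finite net.
-/

open Set Metric

section Arrows

variable {Γ Δ Θ A B C K L ι : Type*} [PseudoMetricSpace B] [PseudoMetricSpace C]
  [PseudoMetricSpace K] [PseudoMetricSpace L]

/-- The Ramsey arrow for Lipschitz colorings: every `1`-Lipschitz coloring `c : B → K` oscillates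
by at most `ε` on the image of some member of the family `f` of maps `A → B`. -/
def LipschitzArrow (f : Γ → A → B) (K : Type*) [PseudoMetricSpace K] (ε : ℝ) : Prop :=
  ∀ c : B → K, LipschitzWith 1 c → ∃ γ, ∀ a a', dist (c (f γ a)) (c (f γ a')) ≤ ε

/-- The Ramsey arrow for arbitrary colorings with colors in `ι`: for every coloring of `B`, some
member of the family `f` of maps `A → B` has its image within `ε` of a single color class. -/
def ColoringArrow (f : Γ → A → B) (ι : Type*) (ε : ℝ) : Prop :=
  ∀ c : B → ι, ∃ γ i, ∀ a, ∃ b, c b = i ∧ dist (f γ a) b ≤ ε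

theorem LipschitzArrow.of_isometry {f : Γ → A → B} {ε : ℝ} (h : LipschitzArrow f K ε)
    {e : L → K} (he : Isometry e) : LipschitzArrow f L ε := by
  intro c hc
  obtain ⟨γ, hγ⟩ := h (e ∘ c) ((he.lipschitzWith_iff 1).2 hc)
  exact ⟨γ, fun a a' => (he.dist_eq _ _).symm.trans_le (hγ a a')⟩

theorem LipschitzArrow.prod {f : Γ → A → B} {g : Δ → B → C} {k : Θ → A → C} {ε : ℝ}
    (hf : LipschitzArrow f K ε) (hg : LipschitzArrow g L ε) (hg_lip : ∀ δ, LipschitzWith 1 (g δ))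
    (hk : ∀ δ γ, ∃ θ, k θ = g δ ∘ f γ) : LipschitzArrow k (K × L) ε := by
  intro c hc
  obtain ⟨δ, hδ⟩ := hg (fun b => (c b).2) (by simpa using! LipschitzWith.prod_snd.comp hc)
  obtain ⟨γ, hγ⟩ := hf (fun b => (c (g δ b)).1)
    (by simpa using! (LipschitzWith.prod_fst.comp hc).comp (hg_lip δ))
  obtain ⟨θ, hθ⟩ := hk δ γ
  refine ⟨θ, fun a a' => ?_⟩
  rw [hθ, Prod.dist_eq]
  exact max_le (hγ a a') (hδ (f γ a) (f γ a'))

theorem ColoringArrow.lipschitzArrow {f : Γ → A → B} {ε δ : ℝ} (h : ColoringArrow f ι ε)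
    {p : ι → K} (hp : ∀ k, ∃ i, dist k (p i) ≤ δ) : LipschitzArrow f K (2 * (ε + δ)) := by
  intro c hc
  choose r hr using hp
  obtain ⟨γ, i, hγ⟩ := h (r ∘ c)
  have dist_center_le (a : A) : dist (c (f γ a)) (p i) ≤ ε + δ := by
    obtain ⟨b, rfl, hb⟩ := hγ a
    calc dist (c (f γ a)) (p (r (c b)))
        ≤ dist (c (f γ a)) (c b) + dist (c b) (p (r (c b))) := dist_triangle _ _ _
      _ ≤ dist (f γ a) b + δ := add_le_add (by simpa using hc.dist_le_mul (f γ a) b) (hr _)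
      _ ≤ ε + δ := by gcongr
  refine ⟨γ, fun a a' => ?_⟩
  linarith [dist_triangle_right (c (f γ a)) (c (f γ a')) (p i), dist_center_le a,
    dist_center_le a']

/-- The distance to `s` truncated at `1`, which makes the distance to a color class a coloring with
values in `[0, 1]`. As with `Metric.infDist`, it is `0` for `s = ∅`. -/
noncomputable def truncInfDist (s : Set B) (b : B) : Icc (0 : ℝ) 1 :=
  projIcc 0 1 zero_le_one (infDist b s)

theorem lipschitzWith_truncInfDist (s : Set B) : LipschitzWith 1 (truncInfDist s) := by
  simpa using! (LipschitzWith.projIcc zero_le_one).comp (lipschitz_infDist_pt s)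

theorem coe_truncInfDist (s : Set B) (b : B) : (truncInfDist s b : ℝ) = min 1 (infDist b s) :=
  max_eq_right (le_min zero_le_one infDist_nonneg)

theorem exists_mem_dist_lt_of_dist_truncInfDist_lt {s : Set B} {a b : B} {ε : ℝ} (ha : a ∈ s)
    (hε : ε ≤ 1) (h : dist (truncInfDist s a) (truncInfDist s b) < ε) :
    ∃ b' ∈ s, dist b b' < ε := by
  have trunc_lt : min 1 (infDist b s) < ε := by
    rw [dist_comm, Subtype.dist_eq, Real.dist_eq, coe_truncInfDist, coe_truncInfDist,
      infDist_zero_of_mem ha, min_eq_right zero_le_one, sub_zero] at h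
    exact (le_abs_self _).trans_lt h
  exact (infDist_lt_iff ⟨a, ha⟩).1 ((min_lt_iff.1 trunc_lt).resolve_left hε.not_gt)

theorem LipschitzArrow.coloringArrow [Fintype ι] [Nonempty ι] {f : Γ → A → B} {δ ε : ℝ}
    (h : LipschitzArrow f (ι → Icc (0 : ℝ) 1) δ) (hδε : δ < ε) (hε : ε ≤ 1) :
    ColoringArrow f ι ε := by
  intro c
  obtain ⟨γ, hγ⟩ := h (fun b i => truncInfDist (c ⁻¹' {i}) b) <|
    LipschitzWith.of_edist_le fun b b' => edist_pi_le_iff.2 fun i => by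
      simpa using lipschitzWith_truncInfDist (c ⁻¹' {i}) b b'
  rcases isEmpty_or_nonempty A with _ | ⟨⟨a₀⟩⟩
  · exact ⟨γ, Classical.arbitrary ι, isEmptyElim⟩
  · refine ⟨γ, c (f γ a₀), fun a => ?_⟩
    obtain ⟨b, hb, hab⟩ := exists_mem_dist_lt_of_dist_truncInfDist_lt
      (s := c ⁻¹' {c (f γ a₀)}) rfl hε <|
        (dist_le_pi_dist _ _ (c (f γ a₀))).trans_lt ((hγ a₀ a).trans_lt hδε)
    exact ⟨b, hb, hab.le⟩

end Arrows

section LinIsomEmb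

variable {X Y Z : Type*} [NormedAddCommGroup X] [NormedSpace ℂ X] [NormedAddCommGroup Y]
  [NormedSpace ℂ Y] [NormedAddCommGroup Z] [NormedSpace ℂ Z]

/-- The space `Emb(X, Y)` of linear isometric embeddings. It is reducible to a subtype of
`X →L[ℂ] Y` so as to carry the operator-norm metric. -/
abbrev LinIsomEmb (X Y : Type*) [NormedAddCommGroup X] [NormedSpace ℂ X] [NormedAddCommGroup Y]
    [NormedSpace ℂ Y] : Type _ :=
  {φ : X →L[ℂ] Y // IsLinIsomEmb φ}

namespace LinIsomEmb

/-- The identity of `X` as an element of `Emb(X, X)`. -/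
def id (X : Type*) [NormedAddCommGroup X] [NormedSpace ℂ X] : LinIsomEmb X X :=
  ⟨.id ℂ X, fun _ => rfl⟩

/-- Composition `Emb(Y, Z) × Emb(X, Y) → Emb(X, Z)`. -/
def comp (γ : LinIsomEmb Y Z) (η : LinIsomEmb X Y) : LinIsomEmb X Z :=
  ⟨γ.1.comp η.1, fun x => (γ.2 (η.1 x)).trans (η.2 x)⟩

theorem dist_eq (φ ψ : LinIsomEmb X Y) : dist φ ψ = ‖φ.1 - ψ.1‖ :=
  dist_eq_norm φ.1 ψ.1

theorem isometry_comp (γ : LinIsomEmb Y Z) : Isometry (γ.comp : LinIsomEmb X Y → _) := by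
  let γ' : Y →ₗᵢ[ℂ] Z := ⟨γ.1, γ.2⟩
  refine Isometry.of_dist_eq fun φ ψ => ?_
  calc dist (γ.comp φ) (γ.comp ψ)
      = ‖γ'.toContinuousLinearMap.comp (φ.1 - ψ.1)‖ := by
        rw [dist_eq, ContinuousLinearMap.comp_sub]; rfl
    _ = ‖φ.1 - ψ.1‖ := γ'.norm_toContinuousLinearMap_comp
    _ = dist φ ψ := (dist_eq φ ψ).symm

end LinIsomEmb

end LinIsomEmb

section RamseyProperty

variable {K L ι : Type*} [PseudoMetricSpace K] [PseudoMetricSpace L] {ε : ℝ}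

/-- The approximate Ramsey property of the class of finite-dimensional complex normed spaces for
`1`-Lipschitz colorings with values in one fixed space `K` and one fixed error `ε`. -/
def LipschitzARP (K : Type*) [PseudoMetricSpace K] (ε : ℝ) : Prop :=
  ∀ (X Y : Type u) [NormedAddCommGroup X] [NormedSpace ℂ X] [FiniteDimensional ℂ X]
    [NormedAddCommGroup Y] [NormedSpace ℂ Y] [FiniteDimensional ℂ Y],
    ∃ (Z : Type u) (_ : NormedAddCommGroup Z) (_ : NormedSpace ℂ Z) (_ : FiniteDimensional ℂ Z),
      LipschitzArrow (LinIsomEmb.comp : LinIsomEmb Y Z → LinIsomEmb X Y → LinIsomEmb X Z) K ε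

/-- The approximate Ramsey property of the class of finite-dimensional complex normed spaces for
arbitrary colorings with one fixed set `ι` of colors and one fixed error `ε`. -/
def ColoringARP (ι : Type*) (ε : ℝ) : Prop :=
  ∀ (X Y : Type u) [NormedAddCommGroup X] [NormedSpace ℂ X] [FiniteDimensional ℂ X]
    [NormedAddCommGroup Y] [NormedSpace ℂ Y] [FiniteDimensional ℂ Y],
    ∃ (Z : Type u) (_ : NormedAddCommGroup Z) (_ : NormedSpace ℂ Z) (_ : FiniteDimensional ℂ Z),
      ColoringArrow (LinIsomEmb.comp : LinIsomEmb Y Z → LinIsomEmb X Y → LinIsomEmb X Z) ι ε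

theorem LipschitzARP.of_isometry (h : LipschitzARP.{u} K ε) {e : L → K} (he : Isometry e) :
    LipschitzARP.{u} L ε := by
  intro X Y _ _ _ _ _ _
  obtain ⟨Z, _, _, _, hZ⟩ := h X Y
  exact ⟨Z, _, _, inferInstance, hZ.of_isometry he⟩

theorem LipschitzARP.prod (hK : LipschitzARP.{u} K ε) (hL : LipschitzARP.{u} L ε) :
    LipschitzARP.{u} (K × L) ε := by
  intro X Y _ _ _ _ _ _
  obtain ⟨Z', _, _, _, hZ'⟩ := hK X Y
  obtain ⟨Z, _, _, _, hZ⟩ := hL X Z'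
  exact ⟨Z, _, _, inferInstance,
    hZ'.prod hZ (fun γ => γ.isometry_comp.lipschitz) fun δ γ => ⟨δ.comp γ, rfl⟩⟩

theorem lipschitzARP_of_subsingleton [Subsingleton K] (hε : 0 ≤ ε) : LipschitzARP.{u} K ε := by
  intro X Y _ _ _ _ _ _
  refine ⟨Y, _, _, inferInstance, fun c _ => ⟨LinIsomEmb.id Y, fun η₀ η₁ => ?_⟩⟩
  rwa [Subsingleton.elim (c ((LinIsomEmb.id Y).comp η₀)) _, dist_self]

theorem LipschitzARP.fin_pi (h : LipschitzARP.{u} K ε) (hε : 0 ≤ ε) (n : ℕ) :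
    LipschitzARP.{u} (Fin n → K) ε := by
  induction n with
  | zero => exact lipschitzARP_of_subsingleton hε
  | succ n ih =>
    have single : LipschitzARP.{u} (Fin 1 → K) ε :=
      h.of_isometry (IsometryEquiv.funUnique (Fin 1) K).isometry
    exact (ih.prod single).of_isometry (Fin.appendIsometry n 1).symm.isometry

theorem ColoringARP.mono {ε' : ℝ} (h : ColoringARP.{u} ι ε) (hε : ε ≤ ε') :
    ColoringARP.{u} ι ε' := by
  intro X Y _ _ _ _ _ _
  obtain ⟨Z, _, _, _, hZ⟩ := h X Y
  refine ⟨Z, _, _, inferInstance, fun c => ?_⟩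
  obtain ⟨γ, i, hγ⟩ := hZ c
  exact ⟨γ, i, fun η => (hγ η).imp fun _ hξ => ⟨hξ.1, hξ.2.trans hε⟩⟩

theorem coloringARP_of_isEmpty [IsEmpty ι] : ColoringARP.{u} ι ε := fun X _ _ _ _ _ _ _ =>
  ⟨X, _, _, inferInstance, fun c => isEmptyElim (c (LinIsomEmb.id X))⟩

theorem coloringARP_of_lipschitzARP_Icc (h : ∀ δ > 0, LipschitzARP.{u} (Icc (0 : ℝ) 1) δ) (r : ℕ)
    (hε : 0 < ε) : ColoringARP.{u} (Fin r) ε := by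
  rcases isEmpty_or_nonempty (Fin r) with _ | _
  · exact coloringARP_of_isEmpty
  · have min_pos : 0 < min ε 1 := lt_min hε zero_lt_one
    have coloringARP_min : ColoringARP.{u} (Fin r) (min ε 1) := by
      intro X Y _ _ _ _ _ _
      obtain ⟨Z, _, _, _, hZ⟩ := (h _ (half_pos min_pos)).fin_pi (half_pos min_pos).le r X Y
      exact ⟨Z, _, _, inferInstance, hZ.coloringArrow (half_lt_self min_pos) (min_le_right _ _)⟩
    exact coloringARP_min.mono (min_le_left _ _)

theorem exists_fin_forall_dist_lt_of_totallyBounded (hK : TotallyBounded (univ : Set K))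
    (hε : 0 < ε) : ∃ (r : ℕ) (p : Fin r → K), ∀ k, ∃ i, dist k (p i) < ε := by
  obtain ⟨t, -, ht, hcover⟩ := finite_approx_of_totallyBounded hK ε hε
  obtain ⟨r, p, -, rfl⟩ := ht.fin_param
  exact ⟨r, p, fun k => by simpa using hcover (mem_univ k)⟩

theorem lipschitzARP_of_coloringARP (h : ∀ (r : ℕ), ∀ δ > 0, ColoringARP.{u} (Fin r) δ)
    (hK : TotallyBounded (univ : Set K)) (hε : 0 < ε) : LipschitzARP.{u} K ε := by
  intro X Y _ _ _ _ _ _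
  have hε' : 0 < ε / 4 := by positivity
  obtain ⟨r, p, hp⟩ := exists_fin_forall_dist_lt_of_totallyBounded hK hε'
  obtain ⟨Z, _, _, _, hZ⟩ := h r _ hε' X Y
  refine ⟨Z, _, _, inferInstance, ?_⟩
  convert hZ.lipschitzArrow fun k => (hp k).imp fun _ => le_of_lt using 1
  ring

theorem continuousARP_iff :
    ContinuousARP.{u} ↔ ∀ ε > 0, LipschitzARP.{u} (Icc (0 : ℝ) 1) ε := by
  constructor
  · intro h ε hε X Y _ _ _ _ _ _
    obtain ⟨Z, _, _, _, hZ⟩ := h X Y _ _ inferInstance _ _ inferInstance ε hε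
    refine ⟨Z, _, _, inferInstance, fun c hc => ?_⟩
    obtain ⟨γ, hγ, hosc⟩ := hZ (fun φ => c φ) hc fun φ => (c φ).2
    exact ⟨⟨γ, hγ⟩, fun η₀ η₁ => hosc η₀.1 η₁.1 η₀.2 η₁.2 _ _⟩
  · intro h X Y _ _ _ _ _ _ ε hε
    obtain ⟨Z, _, _, _, hZ⟩ := h ε hε X Y
    refine ⟨Z, _, _, inferInstance, fun c hc hc01 => ?_⟩
    obtain ⟨γ, hosc⟩ := hZ (fun φ => ⟨c φ, hc01 φ⟩) (hc.subtype_mk hc01)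
    exact ⟨γ.1, γ.2, fun η₀ η₁ e₀ e₁ _ _ => hosc ⟨η₀, e₀⟩ ⟨η₁, e₁⟩⟩

theorem discreteARP_iff :
    DiscreteARP.{u} ↔ ∀ (r : ℕ), ∀ ε > 0, ColoringARP.{u} (Fin r) ε := by
  constructor
  · intro h r ε hε X Y _ _ _ _ _ _
    obtain ⟨Z, _, _, _, hZ⟩ := h X Y _ _ inferInstance _ _ inferInstance r ε hε
    refine ⟨Z, _, _, inferInstance, fun c => ?_⟩
    obtain ⟨γ, hγ, i, hclose⟩ := hZ c
    refine ⟨⟨γ, hγ⟩, i, fun η => ?_⟩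
    obtain ⟨ξ, hξ, hcolor, hdist⟩ := hclose η.1 η.2
    exact ⟨⟨ξ, hξ⟩, hcolor, (LinIsomEmb.dist_eq _ _).trans_le hdist⟩
  · intro h X Y _ _ _ _ _ _ r ε hε
    obtain ⟨Z, _, _, _, hZ⟩ := h r ε hε X Y
    refine ⟨Z, _, _, inferInstance, fun c => ?_⟩
    obtain ⟨γ, i, hclose⟩ := hZ c
    refine ⟨γ.1, γ.2, i, fun η e => ?_⟩
    obtain ⟨ξ, hcolor, hdist⟩ := hclose ⟨η, e⟩
    rw [LinIsomEmb.dist_eq] at hdist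
    exact ⟨ξ.1, ξ.2, hcolor, hdist⟩

theorem compactARP_iff :
    CompactARP.{u} ↔
      ∀ (K : Type) [MetricSpace K] [CompactSpace K], ∀ ε > 0, LipschitzARP.{u} K ε := by
  constructor
  · intro h K _ _ ε hε X Y _ _ _ _ _ _
    obtain ⟨Z, _, _, _, hZ⟩ := h X Y _ _ inferInstance _ _ inferInstance K _ inferInstance ε hε
    refine ⟨Z, _, _, inferInstance, fun c hc => ?_⟩
    obtain ⟨γ, hγ, hosc⟩ := hZ c hc
    exact ⟨⟨γ, hγ⟩, fun η₀ η₁ => hosc η₀.1 η₁.1 η₀.2 η₁.2 _ _⟩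
  · intro h X Y _ _ _ _ _ _ K _ _ ε hε
    obtain ⟨Z, _, _, _, hZ⟩ := h K ε hε X Y
    refine ⟨Z, _, _, inferInstance, fun c hc => ?_⟩
    obtain ⟨γ, hosc⟩ := hZ c hc
    exact ⟨γ.1, γ.2, fun η₀ η₁ e₀ e₁ _ _ => hosc ⟨η₀, e₀⟩ ⟨η₁, e₁⟩⟩

end RamseyProperty

/-- For the class of finite-dimensional complex normed spaces, the approximate Ramsey property,
the discrete approximate Ramsey property, and the compact approximate Ramsey property are all
equivalent. -/
theorem arp_iff_discrete_iff_compact :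
    (ContinuousARP.{u} ↔ DiscreteARP.{u}) ∧ (DiscreteARP.{u} ↔ CompactARP.{u}) := by
  have discrete_of_continuous (h : ContinuousARP.{u}) : DiscreteARP.{u} :=
    discreteARP_iff.2 fun r _ hε => coloringARP_of_lipschitzARP_Icc (continuousARP_iff.1 h) r hε
  have compact_of_discrete (h : DiscreteARP.{u}) : CompactARP.{u} :=
    compactARP_iff.2 fun _ _ _ _ hε =>
      lipschitzARP_of_coloringARP (discreteARP_iff.1 h) isCompact_univ.totallyBounded hε
  have continuous_of_compact (h : CompactARP.{u}) : ContinuousARP.{u} :=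
    continuousARP_iff.2 (compactARP_iff.1 h (Icc (0 : ℝ) 1))
  exact ⟨⟨discrete_of_continuous, continuous_of_compact ∘ compact_of_discrete⟩,
    ⟨compact_of_discrete, discrete_of_continuous ∘ continuous_of_compact⟩⟩
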